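/- The user-centric index satisfies additivity, null artists, and equal global impact of users, but it fails equal individual impact of similar users and fails equal impact of artists. -/

import Mathlib

open Finset

/-- A popularity index assigns, to every streaming problem `(N, M, t)`
(artists `N`, users `M`, stream matrix `t`), a real value for each artist. -/
abbrev SIndex : Type := Finset ℕ → Finset ℕ → (ℕ → ℕ → ℕ) → ℕ → ℝ

/-- `(N, M, t)` is a streaming problem: `N` (artists) and `M` (users) are nonempty
finite sets and every user has streamed some content. -/
def IsProblem (N M : Finset ℕ) (t : ℕ → ℕ → ℕ) : Prop :=
  N.Nonempty ∧ M.Nonempty ∧ ∀ j ∈ M, 0 < ∑ i ∈ N, t i j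

/-- `I` is an index: nonnegative values with positive total, on every problem. -/
def IsIndex (I : SIndex) : Prop :=
  ∀ N M t, IsProblem N M t →
    (∀ i ∈ N, 0 ≤ I N M t i) ∧ 0 < ∑ i ∈ N, I N M t i

/-- Additivity: if `M` splits into disjoint `M₁, M₂` and `t` agrees with
`t₁` on the columns of `M₁` and with `t₂` on the columns of `M₂`, then the
index is the sum of the indices of the two subproblems. -/
def AdditiveIndex (I : SIndex) : Prop :=
  ∀ N M M₁ M₂ (t t₁ t₂ : ℕ → ℕ → ℕ),
    IsProblem N M t → IsProblem N M₁ t₁ → IsProblem N M₂ t₂ →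
    M = M₁ ∪ M₂ → Disjoint M₁ M₂ →
    (∀ i ∈ N, ∀ j ∈ M₁, t i j = t₁ i j) →
    (∀ i ∈ N, ∀ j ∈ M₂, t i j = t₂ i j) →
    ∀ i ∈ N, I N M t i = I N M₁ t₁ i + I N M₂ t₂ i

/-- Null artists: an artist with no streams gets importance zero. -/
def NullArtists (I : SIndex) : Prop :=
  ∀ N M t, IsProblem N M t → ∀ i ∈ N, (∑ j ∈ M, t i j) = 0 → I N M t i = 0

/-- Pairwise homogeneity. -/
def PairwiseHomogeneous (I : SIndex) : Prop :=
  ∀ N M t, IsProblem N M t → ∀ i ∈ N, ∀ i' ∈ N, ∀ lam : ℝ, 0 ≤ lam →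
    (∀ j ∈ M, (t i j : ℝ) = lam * (t i' j : ℝ)) →
    I N M t i = lam * I N M t i'

/-- Equal individual impact of similar users (removing either of two users with
the same streams on artist `i` has the same effect on `i`'s index). -/
def EqualIndividualImpact (I : SIndex) : Prop :=
  ∀ N M t, IsProblem N M t → 2 ≤ M.card →
    ∀ i ∈ N, ∀ j ∈ M, ∀ j' ∈ M, t i j = t i j' →
      I N (M.erase j) t i = I N (M.erase j') t i

/-- Equal global impact of users. -/
def EqualGlobalImpact (I : SIndex) : Prop :=
  ∀ N M t, IsProblem N M t → 2 ≤ M.card →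
    ∀ j ∈ M, ∀ j' ∈ M,
      ∑ i ∈ N, I N (M.erase j) t i = ∑ i ∈ N, I N (M.erase j') t i

/-- Equal impact of artists (for pairs whose removal still leaves a streaming problem). -/
def EqualArtistImpact (I : SIndex) : Prop :=
  ∀ N M t, IsProblem N M t → 2 ≤ N.card →
    ∀ i ∈ N, ∀ i' ∈ N,
      IsProblem (N.erase i) M t → IsProblem (N.erase i') M t →
      I N M t i - I (N.erase i') M t i = I N M t i' - I (N.erase i) M t i'

/-- The streaming profile of user `j`, viewed as a stream vector over `N`
(zero outside `N`). -/
def prof (N : Finset ℕ) (t : ℕ → ℕ → ℕ) (j : ℕ) : ℕ → ℕ :=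
  fun i => if i ∈ N then t i j else 0

/-- `x` is a stream vector over `N`: it vanishes outside `N`. -/
def PadVec (N : Finset ℕ) (x : ℕ → ℕ) : Prop := ∀ i, i ∉ N → x i = 0

/-- A weight system: a positive weight for each user and each stream vector over each `N`. -/
def IsWeightSystem (ω : Finset ℕ → ℕ → (ℕ → ℕ) → ℝ) : Prop :=
  ∀ N (j : ℕ) x, PadVec N x → 0 < ω N j x

/-- `I` is a weighted index. -/
def IsWeightedIndex (I : SIndex) : Prop :=
  ∃ ω, IsWeightSystem ω ∧
    ∀ N M t, IsProblem N M t → ∀ i ∈ N,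
      I N M t i = ∑ j ∈ M, ω N j (prof N t j) * (t i j : ℝ)

/-- A decomposition function `d N i j x` (artist `i`, user `j`, stream vector `x` over `N`). -/
abbrev DFun : Type := Finset ℕ → ℕ → ℕ → (ℕ → ℕ) → ℝ

/-- `d` is a genuine decomposition function: nonnegative, and zero on artists with
no streams in the vector. -/
def IsDecompFn (d : DFun) : Prop :=
  (∀ N, ∀ i ∈ N, ∀ (j : ℕ) x, PadVec N x → 0 ≤ d N i j x) ∧
  (∀ N, ∀ i ∈ N, ∀ (j : ℕ) x, PadVec N x → x i = 0 → d N i j x = 0)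

/-- `d` decomposes the index `I`. -/
def Decomposes (d : DFun) (I : SIndex) : Prop :=
  ∀ N M t, IsProblem N M t → ∀ i ∈ N,
    I N M t i = ∑ j ∈ M, d N i j (prof N t j)

/-- `I` is a decomposable index. -/
def IsDecomposable (I : SIndex) : Prop :=
  IsIndex I ∧ ∃ d, IsDecompFn d ∧ Decomposes d I

/-- A decomposition function is user independent if `d N i j x` only depends on `x i`. -/
def UserIndependent (d : DFun) : Prop :=
  ∀ N, ∀ i ∈ N, ∀ (j j' : ℕ) x x', PadVec N x → PadVec N x' →
    x i = x' i → d N i j x = d N i j' x'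

/-- A decomposition function is aggregate invariant if the total importance granted
by any (nonzero) stream vector of any user is constant. -/
def AggregateInvariant (d : DFun) : Prop :=
  ∀ N (j j' : ℕ) x x', PadVec N x → PadVec N x' →
    (∃ i ∈ N, 0 < x i) → (∃ i ∈ N, 0 < x' i) →
    ∑ i ∈ N, d N i j x = ∑ i ∈ N, d N i j' x'

/-- The Shapley value of the TU game `v` with player set `N`. -/
noncomputable def shapleyValue (N : Finset ℕ) (v : Finset ℕ → ℝ) (i : ℕ) : ℝ :=
  ∑ S ∈ (N.erase i).powerset,
    ((S.card.factorial * (N.card - S.card - 1).factorial : ℕ) : ℝ) / ((N.card.factorial : ℕ) : ℝ)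
      * (v (insert i S) - v S)

/-- The artists of `N` streamed by the vector `x`. -/
def suppOn (N : Finset ℕ) (x : ℕ → ℕ) : Finset ℕ := N.filter (fun i => 0 < x i)

/-- Restriction (with zero padding) of a stream vector to `A`. -/
def padTo (A : Finset ℕ) (x : ℕ → ℕ) : ℕ → ℕ := fun i => if i ∈ A then x i else 0

/-- `d` is Shapley induced: there is a family of TU games, coherent under restriction
to streamed artists, whose Shapley values yield `d`. -/
def ShapleyInduced (d : DFun) : Prop :=
  ∃ V : Finset ℕ → ℕ → (ℕ → ℕ) → Finset ℕ → ℝ,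
    (∀ N (j : ℕ) x, V N j x ∅ = 0) ∧
    (∀ N (j : ℕ) x, PadVec N x → ∀ S ⊆ N,
      V N j x S = V (S ∩ suppOn N x) j (padTo (S ∩ suppOn N x) x) (S ∩ suppOn N x)) ∧
    (∀ N (j : ℕ) x, PadVec N x → ∀ i ∈ N, d N i j x = shapleyValue N (V N j x) i)

/-- The pro-rata index. -/
noncomputable def proRata : SIndex := fun _N M t i => ∑ j ∈ M, (t i j : ℝ)

/-- The user-centric index. -/
noncomputable def userCentric : SIndex := fun N M t i =>
  ∑ j ∈ M, (t i j : ℝ) / (∑ i' ∈ N, (t i' j : ℝ))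

/-- The Shapley index. -/
noncomputable def shapleyIndex : SIndex := fun N M t i =>
  ∑ j ∈ M, if 0 < t i j then ((N.filter fun i' => 0 < t i' j).card : ℝ)⁻¹ else 0

/-- The equal-division index. -/
noncomputable def equalDivision : SIndex := fun N M _t _i => (M.card : ℝ) / (N.card : ℝ)

/-!
Each user distributes one unit of importance over the artists in proportion to their streams, so
the indices of all artists sum to the number of users. This gives positivity of the total and equal
global impact; additivity and null artists hold because the index is a sum over users of terms that
each depend on a single column.

A user's unit is diluted by the streams given to other artists. Hence two users with the same
positive number of streams on `i` contribute equally to `i` only if their total streams agree.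
Likewise, with just two artists, removing one leaves the whole mass to the other, so equal impact
would force the two artists to have the same index.
-/

section

variable {N M M₁ M₂ : Finset ℕ} {t t' : ℕ → ℕ → ℕ} {i i' j j' : ℕ}

theorem userCentric_nonneg (N M : Finset ℕ) (t : ℕ → ℕ → ℕ) (i : ℕ) :
    0 ≤ userCentric N M t i := by
  unfold userCentric
  positivity

theorem sum_userCentric (h : ∀ j ∈ M, 0 < ∑ i ∈ N, t i j) :
    ∑ i ∈ N, userCentric N M t i = M.card := by
  have user_mass_eq_one : ∀ j ∈ M, ∑ i ∈ N, (t i j : ℝ) / ∑ i' ∈ N, (t i' j : ℝ) = 1 := by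
    intro j hj
    rw [← sum_div]
    exact div_self (mod_cast (h j hj).ne')
  calc ∑ i ∈ N, userCentric N M t i
      = ∑ j ∈ M, ∑ i ∈ N, (t i j : ℝ) / ∑ i' ∈ N, (t i' j : ℝ) := sum_comm
    _ = ∑ _j ∈ M, (1 : ℝ) := sum_congr rfl user_mass_eq_one
    _ = M.card := by simp

theorem userCentric_union (h : Disjoint M₁ M₂) (N : Finset ℕ) (t : ℕ → ℕ → ℕ) (i : ℕ) :
    userCentric N (M₁ ∪ M₂) t i = userCentric N M₁ t i + userCentric N M₂ t i :=
  sum_union h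

theorem userCentric_congr (h : ∀ i ∈ N, ∀ j ∈ M, t i j = t' i j) (hi : i ∈ N) :
    userCentric N M t i = userCentric N M t' i := by
  refine sum_congr rfl fun j hj => ?_
  have total_eq : ∑ i' ∈ N, (t i' j : ℝ) = ∑ i' ∈ N, (t' i' j : ℝ) :=
    sum_congr rfl fun i' hi' => by rw [h i' hi' j hj]
  rw [h i hi j hj, total_eq]

theorem userCentric_eq_zero (h : ∀ j ∈ M, t i j = 0) (N : Finset ℕ) :
    userCentric N M t i = 0 :=
  sum_eq_zero fun j hj => by rw [h j hj, Nat.cast_zero, zero_div]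

theorem userCentric_singleton_user (N : Finset ℕ) (t : ℕ → ℕ → ℕ) (i j : ℕ) :
    userCentric N {j} t i = t i j / ∑ i' ∈ N, (t i' j : ℝ) :=
  sum_singleton _ j

theorem userCentric_singleton_artist (h : ∀ j ∈ M, 0 < t i j) :
    userCentric {i} M t i = M.card := by
  have column_pos : ∀ j ∈ M, 0 < ∑ i' ∈ {i}, t i' j := by simpa only [sum_singleton] using h
  simpa only [sum_singleton] using sum_userCentric column_pos

theorem userCentric_singleton_user_eq_iff (hjj' : t i j = t i j') (hj : 0 < t i j) :
    userCentric N {j} t i = userCentric N {j'} t i ↔ ∑ i' ∈ N, t i' j = ∑ i' ∈ N, t i' j' := by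
  have streams_ne_zero : (t i j' : ℝ) ≠ 0 := mod_cast (hjj' ▸ hj).ne'
  rw [userCentric_singleton_user, userCentric_singleton_user, hjj', div_eq_mul_inv, div_eq_mul_inv,
    mul_right_inj' streams_ne_zero, inv_inj]
  norm_cast

theorem userCentric_pair_impact_eq_iff (hne : i ≠ i')
    (hi : ∀ j ∈ M, 0 < t i j) (hi' : ∀ j ∈ M, 0 < t i' j) :
    userCentric {i, i'} M t i - userCentric (({i, i'} : Finset ℕ).erase i') M t i =
        userCentric {i, i'} M t i' - userCentric (({i, i'} : Finset ℕ).erase i) M t i' ↔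
      userCentric {i, i'} M t i = userCentric {i, i'} M t i' := by
  have erase_left : ({i, i'} : Finset ℕ).erase i = {i'} := erase_insert (by simpa using hne)
  have erase_right : ({i, i'} : Finset ℕ).erase i' = {i} := by
    rw [pair_comm, erase_insert (by simpa using hne.symm)]
  rw [erase_left, erase_right, userCentric_singleton_artist hi, userCentric_singleton_artist hi',
    sub_left_inj]

end

theorem isIndex_userCentric : IsIndex userCentric := by
  rintro N M t ⟨-, hM, hpos⟩
  refine ⟨fun i _ => userCentric_nonneg N M t i, ?_⟩
  rw [sum_userCentric hpos]
  exact mod_cast hM.card_pos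

theorem additiveIndex_userCentric : AdditiveIndex userCentric := by
  rintro N _ M₁ M₂ t t₁ t₂ - - - rfl hdisj h₁ h₂ i hi
  rw [userCentric_union hdisj, userCentric_congr h₁ hi, userCentric_congr h₂ hi]

theorem nullArtists_userCentric : NullArtists userCentric :=
  fun N _ _ _ _ _ hnull => userCentric_eq_zero (sum_eq_zero_iff.mp hnull) N

theorem equalGlobalImpact_userCentric : EqualGlobalImpact userCentric := by
  rintro N M t ⟨-, -, hpos⟩ - j hj j' hj'
  have sum_erase (k : ℕ) : ∑ i ∈ N, userCentric N (M.erase k) t i = (M.erase k).card :=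
    sum_userCentric fun l hl => hpos l (mem_of_mem_erase hl)
  rw [sum_erase, sum_erase, card_erase_of_mem hj, card_erase_of_mem hj']

theorem not_equalIndividualImpact_userCentric : ¬ EqualIndividualImpact userCentric := by
  intro himpact
  let t : ℕ → ℕ → ℕ := fun i j => if i = 0 then 1 else j
  have ht : IsProblem {0, 1} {1, 2} t := by unfold IsProblem; decide
  have index_eq : userCentric {0, 1} {2} t 0 = userCentric {0, 1} {1} t 0 :=
    himpact _ _ t ht (by decide) 0 (by decide) 1 (by decide) 2 (by decide) rfl
  have total_eq : ∑ i ∈ {0, 1}, t i 2 = ∑ i ∈ {0, 1}, t i 1 :=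
    (userCentric_singleton_user_eq_iff (by decide) (by decide)).mp index_eq
  exact absurd total_eq (by decide)

theorem not_equalArtistImpact_userCentric : ¬ EqualArtistImpact userCentric := by
  intro himpact
  let t : ℕ → ℕ → ℕ := fun i _ => i
  have index_eq : userCentric {1, 2} {0} t 1 = userCentric {1, 2} {0} t 2 :=
    (userCentric_pair_impact_eq_iff (by decide) (by decide) (by decide)).mp <|
      himpact {1, 2} {0} t (by unfold IsProblem; decide) (by decide) 1 (by decide) 2 (by decide)
        (by unfold IsProblem; decide) (by unfold IsProblem; decide)
  rw [userCentric_singleton_user, userCentric_singleton_user] at index_eq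
  norm_num [t] at index_eq

/-- The user-centric index satisfies additivity, null artists, and equal
global impact of users, but it fails equal individual impact of similar users and fails
equal impact of artists. -/
theorem statement17 :
    IsIndex userCentric ∧ AdditiveIndex userCentric ∧ NullArtists userCentric ∧
    EqualGlobalImpact userCentric ∧
    ¬ EqualIndividualImpact userCentric ∧ ¬ EqualArtistImpact userCentric :=
  ⟨isIndex_userCentric, additiveIndex_userCentric, nullArtists_userCentric,
    equalGlobalImpact_userCentric, not_equalIndividualImpact_userCentric,
    not_equalArtistImpact_userCentric⟩
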